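/- Let h, X₁, X₂ ∈ A₁ be nonzero elements and let λ₁, λ₂ be nonzero integers such that [h,X₁] = λ₁X₁, [h,X₂] = λ₂X₂ and [X₁,X₂] = 0. Then λ₁λ₂ > 0, and there exists a nonzero complex number a such that X₁^{|λ₂|} = a·X₂^{|λ₁|}. -/

import Mathlib

noncomputable section

/-- The defining relation of the first Weyl algebra: `p * q = q * p + 1`. -/
inductive weylRel : FreeAlgebra ℂ (Fin 2) → FreeAlgebra ℂ (Fin 2) → Prop
  | rel : weylRel (FreeAlgebra.ι ℂ 0 * FreeAlgebra.ι ℂ 1)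
      (FreeAlgebra.ι ℂ 1 * FreeAlgebra.ι ℂ 0 + 1)

/-- The first Weyl algebra `A₁`, regarded as a complex Lie algebra via the commutator. -/
abbrev Weyl : Type := RingQuot weylRel

/-!
If `u` and `v` are commuting elements of the same weight for `⁅h, ·⁆` and `z` commutes with both and
has weight `μ ≠ 0`, then `u` and `v` are proportional. Otherwise the products `uⁱ vᴺ⁻ⁱ` are linearly
independent, because over an algebraically closed field a homogeneous relation between them would
factor into linear ones. Multiplying by powers of `z` separates weights, and the powers of `h` are
independent over the centralizer of `z`, because `⁅z, ·⁆` acts on them like a derivative. Hence the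
monomials `uⁱ vᴺ⁻ⁱ zʲ hᵏ` with `i, j, k ≤ N` span a space of dimension `(N + 1)³`, while the growth
of `A₁` is only quadratic.

If `λ₁` and `λ₂` have the same sign, `X₁^|λ₂|` and `X₂^|λ₁|` have equal weights. If the signs
differ, their product has weight `0`, like `1`, hence is a nonzero scalar; then `X₁` is a unit of
`A₁`, so a scalar, and it cannot have nonzero weight.
-/

open Polynomial
open scoped Nat

section LinearIndependence

lemma linearIndependent_of_iSupIndep_of_fibers {K M ι κ : Type*} [Ring K] [AddCommGroup M]
    [Module K M] {p : κ → Submodule K M} (hp : iSupIndep p) {v : ι → M} (w : ι → κ)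
    (hv : ∀ i, v i ∈ p (w i)) (hfib : ∀ k, LinearIndepOn K v (w ⁻¹' {k})) :
    LinearIndependent K v := by
  classical
  rw [linearIndependent_iff']
  intro s g hsum i hi
  have hgroup : ∑ k ∈ s.image w, ∑ j ∈ s with w j = k, g j • v j = 0 := by
    rw [Finset.sum_fiberwise_of_maps_to (fun j hj => Finset.mem_image_of_mem w hj), hsum]
  have hfiber : ∑ j ∈ s with w j = w i, g j • v j = 0 := by
    refine (iSupIndep_iff_finsetSum_eq_zero_imp_eq_zero p).1 hp _ _ (fun k _ => ?_) hgroup _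
      (Finset.mem_image_of_mem w hi)
    refine Submodule.sum_mem _ fun j hj => Submodule.smul_mem _ _ ?_
    exact (Finset.mem_filter.1 hj).2 ▸ hv j
  exact linearIndepOn_iff'.1 (hfib (w i)) _ g (fun j hj => (Finset.mem_filter.1 hj).2) hfiber i
    (Finset.mem_filter.2 ⟨hi, rfl⟩)

lemma linearIndependent_pow_of_transcendental {R B : Type*} [CommRing R] [Ring B] [Algebra R B]
    {t : B} (ht : Transcendental R t) : LinearIndependent R fun i : ℕ => t ^ i := by
  have hker : LinearMap.ker (aeval (R := R) t).toLinearMap = ⊥ :=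
    LinearMap.ker_eq_bot.2 (transcendental_iff_injective.1 ht)
  simpa [Function.comp_def] using (basisMonomials R).linearIndependent.map' _ hker

variable {K : Type*} [Field K] [IsAlgClosed K]

lemma linearIndependent_pow_mul_pow_of_forall_ne_smul {B : Type*} [CommRing B] [IsDomain B]
    [Algebra K B] {u v : B} (hv : v ≠ 0) (huv : ∀ r : K, u ≠ r • v) (N : ℕ) :
    LinearIndependent K fun i : Fin (N + 1) => u ^ (i : ℕ) * v ^ (N - i) := by
  let ι : B →ₐ[K] FractionRing B := IsScalarTower.toAlgHom K B (FractionRing B)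
  have hι : Function.Injective ι := IsFractionRing.injective B (FractionRing B)
  have hιv : ι v ≠ 0 := (map_ne_zero_iff ι hι).2 hv
  have htrans : Transcendental K (ι u / ι v) := by
    intro halg
    obtain ⟨r, hr⟩ : ι u / ι v ∈ (algebraMap K (FractionRing B)).range :=
      halg.isIntegral.mem_range_algebraMap_of_minpoly_splits (IsAlgClosed.splits _)
    refine huv r (hι ?_)
    rw [map_smul, Algebra.smul_def, hr, div_mul_cancel₀ _ hιv]
  have hscale : LinearMap.ker (LinearMap.mulLeft K (ι v ^ N)) = ⊥ :=
    LinearMap.ker_eq_bot.2 (mul_right_injective₀ (pow_ne_zero N hιv))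
  have hpow := ((linearIndependent_pow_of_transcendental htrans).comp _
    (Fin.val_injective (n := N + 1))).map' _ hscale
  have hclear : ι.toLinearMap ∘ (fun i : Fin (N + 1) => u ^ (i : ℕ) * v ^ (N - i)) =
      LinearMap.mulLeft K (ι v ^ N) ∘ (fun i : ℕ => (ι u / ι v) ^ i) ∘ Fin.val := by
    funext i
    simp only [Function.comp_apply, AlgHom.toLinearMap_apply, map_mul, map_pow,
      LinearMap.mulLeft_apply, div_pow, pow_sub₀ _ hιv (Nat.lt_succ_iff.1 i.2)]
    ring
  exact LinearIndependent.of_comp ι.toLinearMap (hclear ▸ hpow)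

open scoped IsMulCommutative in
lemma linearIndependent_pow_mul_pow_of_commute {A : Type*} [Ring A] [IsDomain A] [Algebra K A]
    {u v : A} (hcomm : Commute u v) (hv : v ≠ 0) (huv : ∀ r : K, u ≠ r • v) (N : ℕ) :
    LinearIndependent K fun i : Fin (N + 1) => u ^ (i : ℕ) * v ^ (N - i) := by
  let B := Algebra.adjoin K {u, v}
  have : IsMulCommutative B := Algebra.isMulCommutative_adjoin K <| by
    rintro a (rfl | rfl) b (rfl | rfl)
    exacts [rfl, hcomm.eq, hcomm.symm.eq, rfl]
  let u' : B := ⟨u, Algebra.subset_adjoin (by simp)⟩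
  let v' : B := ⟨v, Algebra.subset_adjoin (by simp)⟩
  have hli : LinearIndependent K fun i : Fin (N + 1) => u' ^ (i : ℕ) * v' ^ (N - i) :=
    linearIndependent_pow_mul_pow_of_forall_ne_smul (fun h => hv (congrArg Subtype.val h))
      (fun r h => huv r (congrArg Subtype.val h)) N
  exact hli.map' B.val.toLinearMap (LinearMap.ker_eq_bot.2 Subtype.val_injective)

end LinearIndependence

section Commutator

variable {A : Type*} [Ring A]

lemma lie_mul_eq (x y z : A) : ⁅x, y * z⁆ = ⁅x, y⁆ * z + y * ⁅x, z⁆ := by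
  simp only [Ring.lie_def]
  noncomm_ring

variable {K : Type*} [CommRing K] [Algebra K A]

lemma lie_mul_eq_add_smul {h x y : A} {μ ν : K} (hx : ⁅h, x⁆ = μ • x) (hy : ⁅h, y⁆ = ν • y) :
    ⁅h, x * y⁆ = (μ + ν) • (x * y) := by
  rw [lie_mul_eq, hx, hy, smul_mul_assoc, mul_smul_comm, add_smul]

lemma lie_pow_eq_smul {h x : A} {μ : K} (hx : ⁅h, x⁆ = μ • x) (n : ℕ) :
    ⁅h, x ^ n⁆ = (n * μ) • x ^ n := by
  induction n with
  | zero => simp [Ring.lie_def]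
  | succ n ih =>
    rw [pow_succ, lie_mul_eq_add_smul ih hx]
    push_cast
    ring_nf

variable (K) in
/-- The inner derivation `a ↦ ⁅y, a⁆`. It kills the centralizer of `y`, hence is linear over it for
left multiplication. -/
def adCentralizer (y : A) : Module.End (Subalgebra.centralizer K {y}) A where
  toFun a := ⁅y, a⁆
  map_add' a b := by
    simp only [Ring.lie_def]
    noncomm_ring
  map_smul' b a := by
    have hb : ⁅y, (b : A)⁆ = 0 := by
      rw [Ring.lie_def, Subalgebra.mem_centralizer_iff K |>.1 b.2 y rfl, sub_self]
    simp [Subalgebra.smul_def, lie_mul_eq, hb]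

lemma adCentralizer_apply (y a : A) : adCentralizer K y a = ⁅y, a⁆ := rfl

lemma adCentralizer_pow_mul {y h : A} (hyh : ⁅y, ⁅y, h⁆⁆ = 0) (a : A) (m : ℕ) :
    (adCentralizer K y ^ (m + 1)) (a * h) =
      (adCentralizer K y ^ (m + 1)) a * h + (m + 1) • ((adCentralizer K y ^ m) a * ⁅y, h⁆) := by
  induction m with
  | zero => simp [adCentralizer_apply, lie_mul_eq]
  | succ m ih =>
    rw [pow_succ' _ (m + 1), Module.End.mul_apply, ih, map_add, map_nsmul, adCentralizer_apply,
      adCentralizer_apply, lie_mul_eq, lie_mul_eq, hyh, mul_zero, add_zero,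
      ← adCentralizer_apply (K := K) y ((adCentralizer K y ^ m) a), ← Module.End.mul_apply,
      ← pow_succ', Module.End.mul_apply, adCentralizer_apply, succ_nsmul _ (m + 1)]
    abel

lemma adCentralizer_pow_pow_of_lt {y h : A} (hyh : ⁅y, ⁅y, h⁆⁆ = 0) {m n : ℕ} (hnm : n < m) :
    (adCentralizer K y ^ m) (h ^ n) = 0 := by
  induction n generalizing m with
  | zero =>
    obtain ⟨m, rfl⟩ := Nat.exists_eq_succ_of_ne_zero hnm.ne'
    simp [pow_succ, adCentralizer_apply, Ring.lie_def]
  | succ n ih =>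
    obtain ⟨m, rfl⟩ := Nat.exists_eq_succ_of_ne_zero (Nat.ne_zero_of_lt hnm)
    rw [Nat.succ_eq_add_one, pow_succ h, adCentralizer_pow_mul hyh, ih (by omega), ih (by omega)]
    simp

lemma adCentralizer_pow_pow_self {y h : A} (hyh : ⁅y, ⁅y, h⁆⁆ = 0) (n : ℕ) :
    (adCentralizer K y ^ n) (h ^ n) = n ! • ⁅y, h⁆ ^ n := by
  induction n with
  | zero => simp
  | succ n ih =>
    rw [pow_succ h, adCentralizer_pow_mul hyh, adCentralizer_pow_pow_of_lt hyh n.lt_succ_self, ih,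
      zero_mul, zero_add, smul_mul_assoc, ← pow_succ, smul_smul, Nat.factorial_succ]

lemma linearIndependent_pow_over_centralizer [NoZeroDivisors A] [CharZero A] {y h : A}
    (hyh : ⁅y, ⁅y, h⁆⁆ = 0) (hne : ⁅y, h⁆ ≠ 0) :
    LinearIndependent (Subalgebra.centralizer K {y}) fun n : ℕ => h ^ n := by
  rw [linearIndependent_iff]
  intro b hb
  by_contra hb0
  have hsupp : b.support.Nonempty := Finsupp.support_nonempty_iff.2 hb0
  set n := b.support.max' hsupp
  have htop : (b n : A) * (n ! • ⁅y, h⁆ ^ n) = 0 := by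
    have hD := congrArg (adCentralizer K y ^ n) hb
    rw [Finsupp.linearCombination_apply, Finsupp.sum, map_sum, map_zero,
      Finset.sum_eq_single_of_mem n (b.support.max'_mem hsupp)] at hD
    · rwa [map_smul, adCentralizer_pow_pow_self hyh, Subalgebra.smul_def] at hD
    · intro k hk hkn
      rw [map_smul, adCentralizer_pow_pow_of_lt hyh ((b.support.le_max' k hk).lt_of_ne hkn),
        smul_zero]
  have hbn : (b n : A) ≠ 0 := by
    simpa using Finsupp.mem_support_iff.1 (b.support.max'_mem hsupp)
  refine mul_ne_zero hbn ?_ htop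
  rw [nsmul_eq_mul]
  exact mul_ne_zero (Nat.cast_ne_zero.2 n.factorial_ne_zero) (pow_ne_zero n hne)

end Commutator

section Eigenvectors

variable {K A : Type*} [Field K] [CharZero K] [Ring A] [IsDomain A] [Algebra K A]

lemma linearIndependent_mul_pow_of_lie_eq_smul {ι : Type*} {b : ι → A}
    (hb : LinearIndependent K b) {h z : A} {μ ν : K} (hμ : μ ≠ 0) (hz0 : z ≠ 0)
    (hbν : ∀ i, ⁅h, b i⁆ = ν • b i) (hz : ⁅h, z⁆ = μ • z) :
    LinearIndependent K fun p : ι × ℕ => b p.1 * z ^ p.2 := by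
  have hinj : Function.Injective fun j : ℕ => ν + j * μ := fun i j hij =>
    Nat.cast_injective (mul_right_cancel₀ hμ (add_left_cancel hij))
  let ad : Module.End K A := LinearMap.mulLeft K h - LinearMap.mulRight K h
  refine linearIndependent_of_iSupIndep_of_fibers (ad.eigenspaces_iSupIndep.comp hinj) Prod.snd
    (fun p => ?_) fun j => ?_
  · exact Module.End.mem_eigenspace_iff.2 (lie_mul_eq_add_smul (hbν p.1) (lie_pow_eq_smul hz p.2))
  · have hker : LinearMap.ker (LinearMap.mulRight K (z ^ j)) = ⊥ :=
      LinearMap.ker_eq_bot.2 (mul_left_injective₀ (pow_ne_zero j hz0))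
    have hfst : Function.Injective fun p : (Prod.snd ⁻¹' {j} : Set (ι × ℕ)) => p.1.1 :=
      fun p q hpq => Subtype.ext (Prod.ext hpq (p.2.trans q.2.symm))
    have hfiber : (fun p : (Prod.snd ⁻¹' {j} : Set (ι × ℕ)) => b p.1.1 * z ^ p.1.2) =
        LinearMap.mulRight K (z ^ j) ∘ b ∘ fun p => p.1.1 := by
      funext ⟨p, (hp : p.2 = j)⟩
      simp only [Function.comp_apply, LinearMap.mulRight_apply, hp]
    rw [LinearIndepOn, hfiber]
    exact (hb.comp _ hfst).map' _ hker

lemma linearIndependent_mul_pow_mul_pow {ι : Type*} {b : ι → A}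
    (hb : LinearIndependent K b) {h z : A} {μ ν : K} (hμ : μ ≠ 0) (hz0 : z ≠ 0)
    (hbν : ∀ i, ⁅h, b i⁆ = ν • b i) (hz : ⁅h, z⁆ = μ • z) (hbz : ∀ i, Commute (b i) z) :
    LinearIndependent K fun p : (ι × ℕ) × ℕ => b p.1.1 * z ^ p.1.2 * h ^ p.2 := by
  have : CharZero A := charZero_of_injective_algebraMap (algebraMap K A).injective
  have hzh : ⁅z, h⁆ = -(μ • z) := by rw [← hz, Ring.lie_def, Ring.lie_def, neg_sub]
  have hcentral (p : ι × ℕ) : b p.1 * z ^ p.2 ∈ Subalgebra.centralizer K {z} := by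
    rw [Subalgebra.mem_centralizer_iff]
    rintro _ rfl
    exact ((hbz p.1).symm.mul_right (Commute.self_pow _ p.2)).eq
  have hcoeff : LinearIndependent K fun p : ι × ℕ =>
      (⟨b p.1 * z ^ p.2, hcentral p⟩ : Subalgebra.centralizer K {z}) :=
    LinearIndependent.of_comp (Subalgebra.centralizer K {z}).val.toLinearMap
      (linearIndependent_mul_pow_of_lie_eq_smul hb hμ hz0 hbν hz)
  exact linearIndependent_smul hcoeff (linearIndependent_pow_over_centralizer
    (by simp [hzh, Ring.lie_def])
    (by rw [hzh]; exact neg_ne_zero.2 (smul_ne_zero hμ hz0)))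

end Eigenvectors

section Growth

/-- The `K`-algebra `A` is exhausted by the powers of a finite-dimensional subspace `V` containing
`1`, and `dim Vⁿ = O(n²)`; in particular `A` has Gelfand–Kirillov dimension at most two. -/
def HasQuadraticGrowth (K A : Type*) [Field K] [Ring A] [Algebra K A] : Prop :=
  ∃ V : Submodule K A, V.FG ∧ 1 ≤ V ∧ (∀ a, ∃ n, a ∈ V ^ n) ∧
    ∃ c, ∀ n, Module.finrank K ↥(V ^ n) ≤ c * (n + 1) ^ 2

variable {K A : Type*} [Field K] [Ring A] [Algebra K A]

lemma exists_subset_pow_of_finite {V : Submodule K A} (hone : 1 ≤ V) (hexh : ∀ a, ∃ n, a ∈ V ^ n)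
    {s : Set A} (hs : s.Finite) : ∃ d : ℕ, s ⊆ ↑(V ^ d) := by
  choose deg hdeg using hexh
  obtain ⟨d, hd⟩ := (hs.image deg).bddAbove
  exact ⟨d, fun a ha => pow_le_pow_right' hone (hd (Set.mem_image_of_mem deg ha)) (hdeg a)⟩

lemma exists_mul_sq_lt_succ_cube (c k : ℕ) : ∃ N, c * (k * N + 1) ^ 2 < (N + 1) ^ 3 := by
  refine ⟨c * (k + 1) ^ 2, ?_⟩
  set N := c * (k + 1) ^ 2 with hN
  have hbase : k * N + 1 ≤ (k + 1) * (N + 1) := by nlinarith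
  calc c * (k * N + 1) ^ 2 ≤ c * ((k + 1) * (N + 1)) ^ 2 := by gcongr
    _ = N * (N + 1) ^ 2 := by rw [hN]; ring
    _ < (N + 1) * (N + 1) ^ 2 := by gcongr; omega
    _ = (N + 1) ^ 3 := by ring

lemma HasQuadraticGrowth.exists_not_linearIndependent (hA : HasQuadraticGrowth K A)
    (u v z h : A) :
    ∃ N : ℕ, ¬ LinearIndependent K fun p : (Fin (N + 1) × ℕ) × ℕ =>
      u ^ (p.1.1 : ℕ) * v ^ (N - p.1.1) * z ^ p.1.2 * h ^ p.2 := by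
  obtain ⟨V, hfg, hone, hexh, c, hc⟩ := hA
  obtain ⟨d, hd⟩ := exists_subset_pow_of_finite hone hexh (Set.toFinite {u, v, z, h})
  obtain ⟨N, hN⟩ := exists_mul_sq_lt_succ_cube c (3 * d)
  refine ⟨N, fun hli => ?_⟩
  let e : (Fin (N + 1) × Fin (N + 1)) × Fin (N + 1) → (Fin (N + 1) × ℕ) × ℕ :=
    Prod.map (Prod.map id Fin.val) Fin.val
  have he : Function.Injective e :=
    (Function.injective_id.prodMap Fin.val_injective).prodMap Fin.val_injective
  have hpow {a : A} (ha : a ∈ ({u, v, z, h} : Set A)) (i : ℕ) : a ^ i ∈ V ^ (d * i) :=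
    pow_mul V d i ▸ Submodule.pow_mem_pow _ (hd ha) i
  have hspan : Submodule.span K (Set.range ((fun p : (Fin (N + 1) × ℕ) × ℕ =>
      u ^ (p.1.1 : ℕ) * v ^ (N - p.1.1) * z ^ p.1.2 * h ^ p.2) ∘ e)) ≤ V ^ (3 * d * N) := by
    rw [Submodule.span_le]
    rintro _ ⟨⟨⟨i, j⟩, k⟩, rfl⟩
    have hprod := Submodule.mul_mem_mul (Submodule.mul_mem_mul (Submodule.mul_mem_mul
      (hpow (a := u) (by simp) i) (hpow (a := v) (by simp) (N - i)))
      (hpow (a := z) (by simp) j)) (hpow (a := h) (by simp) k)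
    simp only [← pow_add, ← mul_add] at hprod
    refine pow_le_pow_right' hone ?_ hprod
    rw [mul_comm 3, mul_assoc]
    exact Nat.mul_le_mul_left d (by omega)
  have : FiniteDimensional K ↥(V ^ (3 * d * N)) := Module.Finite.of_fg (hfg.pow _)
  have hcard := (Submodule.finrank_mono hspan).trans (hc _)
  rw [finrank_span_eq_card (hli.comp e he)] at hcard
  simp only [Fintype.card_prod, Fintype.card_fin, ← pow_two, ← pow_succ] at hcard
  exact hcard.not_gt hN

variable [IsAlgClosed K] [CharZero K] [IsDomain A]

lemma HasQuadraticGrowth.exists_eq_smul (hA : HasQuadraticGrowth K A) {h u v z : A} {μ ν : K}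
    (hμ : μ ≠ 0) (hv0 : v ≠ 0) (hz0 : z ≠ 0) (huv : Commute u v) (huz : Commute u z)
    (hvz : Commute v z) (hu : ⁅h, u⁆ = ν • u) (hv : ⁅h, v⁆ = ν • v) (hz : ⁅h, z⁆ = μ • z) :
    ∃ r : K, u = r • v := by
  by_contra! hne
  obtain ⟨N, hN⟩ := hA.exists_not_linearIndependent u v z h
  refine hN (linearIndependent_mul_pow_mul_pow (ν := N * ν)
    (linearIndependent_pow_mul_pow_of_commute huv hv0 hne N) hμ hz0 (fun i => ?_) hz
    fun i => (huz.pow_left _).mul_left (hvz.pow_left _))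
  rw [lie_mul_eq_add_smul (lie_pow_eq_smul hu i) (lie_pow_eq_smul hv (N - i)), ← add_mul,
    ← Nat.cast_add, Nat.add_sub_cancel' (Nat.lt_succ_iff.1 i.2)]

lemma HasQuadraticGrowth.mul_pos_of_lie_eq_smul (hA : HasQuadraticGrowth K A)
    (hunits : ∀ a : A, IsUnit a → a ∈ (algebraMap K A).range) {h X₁ X₂ : A} (hX₁ : X₁ ≠ 0)
    (hX₂ : X₂ ≠ 0) {l₁ l₂ : ℤ} (hl₁ : l₁ ≠ 0) (hl₂ : l₂ ≠ 0) (e₁ : ⁅h, X₁⁆ = (l₁ : K) • X₁)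
    (e₂ : ⁅h, X₂⁆ = (l₂ : K) • X₂) (hcomm : Commute X₁ X₂) : 0 < l₁ * l₂ := by
  by_contra! hle
  have hweight : (l₂.natAbs : K) * l₁ + l₁.natAbs * l₂ = 0 := by
    have hint : |l₂| * l₁ + |l₁| * l₂ = 0 := by
      rcases mul_neg_iff.1 (hle.lt_of_ne (mul_ne_zero hl₁ hl₂)) with ⟨h₁, h₂⟩ | ⟨h₁, h₂⟩
      · rw [abs_of_pos h₁, abs_of_neg h₂]; ring
      · rw [abs_of_neg h₁, abs_of_pos h₂]; ring
    rw [Nat.cast_natAbs, Nat.cast_natAbs]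
    exact_mod_cast hint
  set U := X₁ ^ l₂.natAbs * X₂ ^ l₁.natAbs
  have hU : ⁅h, U⁆ = (0 : K) • U :=
    hweight ▸ lie_mul_eq_add_smul (lie_pow_eq_smul e₁ _) (lie_pow_eq_smul e₂ _)
  have hUX : Commute U X₁ := (Commute.pow_self X₁ _).mul_left (hcomm.symm.pow_left _)
  obtain ⟨r, hr⟩ : ∃ r : K, U = r • 1 :=
    hA.exists_eq_smul (Int.cast_ne_zero.2 hl₁) one_ne_zero hX₁ (Commute.one_right U) hUX
      (Commute.one_left X₁) hU (by simp [Ring.lie_def]) e₁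
  have hU0 : U ≠ 0 := mul_ne_zero (pow_ne_zero _ hX₁) (pow_ne_zero _ hX₂)
  have hUunit : IsUnit U := by
    rw [hr, ← Algebra.algebraMap_eq_smul_one]
    exact (IsUnit.mk0 r fun hr0 => hU0 (by rw [hr, hr0, zero_smul])).map _
  have hX₁unit : IsUnit X₁ :=
    (isUnit_pow_iff (Int.natAbs_ne_zero.2 hl₂)).1 ((hcomm.pow_pow _ _).isUnit_mul_iff.1 hUunit).1
  obtain ⟨s, rfl⟩ := hunits X₁ hX₁unit
  refine smul_ne_zero (Int.cast_ne_zero.2 hl₁) hX₁ (e₁.symm.trans ?_)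
  rw [Ring.lie_def, Algebra.commutes, sub_self]

lemma HasQuadraticGrowth.exists_pow_eq_smul_pow (hA : HasQuadraticGrowth K A) {h X₁ X₂ : A}
    (hX₁ : X₁ ≠ 0) (hX₂ : X₂ ≠ 0) {l₁ l₂ : ℤ} (hpos : 0 < l₁ * l₂) (e₁ : ⁅h, X₁⁆ = (l₁ : K) • X₁)
    (e₂ : ⁅h, X₂⁆ = (l₂ : K) • X₂) (hcomm : Commute X₁ X₂) :
    ∃ a : K, a ≠ 0 ∧ X₁ ^ l₂.natAbs = a • X₂ ^ l₁.natAbs := by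
  have hweight : (l₂.natAbs : K) * l₁ = l₁.natAbs * l₂ := by
    have hint : |l₂| * l₁ = |l₁| * l₂ := by
      rcases mul_pos_iff.1 hpos with ⟨h₁, h₂⟩ | ⟨h₁, h₂⟩
      · rw [abs_of_pos h₁, abs_of_pos h₂, mul_comm]
      · rw [abs_of_neg h₁, abs_of_neg h₂]; ring
    rw [Nat.cast_natAbs, Nat.cast_natAbs]
    exact_mod_cast hint
  have hl₂ : (l₂ : K) ≠ 0 := Int.cast_ne_zero.2 (right_ne_zero_of_mul hpos.ne')
  obtain ⟨a, ha⟩ := hA.exists_eq_smul hl₂ (pow_ne_zero l₁.natAbs hX₂) hX₂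
    (hcomm.pow_pow l₂.natAbs l₁.natAbs) (hcomm.pow_left _) (Commute.pow_self X₂ _)
    (hweight ▸ lie_pow_eq_smul e₁ _) (lie_pow_eq_smul e₂ _) e₂
  refine ⟨a, ?_, ha⟩
  rintro rfl
  exact pow_ne_zero _ hX₁ (ha.trans (zero_smul K _))

end Growth

namespace Weyl

/-- The generator `p`. -/
def P : Weyl := RingQuot.mkAlgHom ℂ weylRel (FreeAlgebra.ι ℂ 0)

/-- The generator `q`. -/
def Q : Weyl := RingQuot.mkAlgHom ℂ weylRel (FreeAlgebra.ι ℂ 1)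

lemma P_mul_Q : P * Q = Q * P + 1 := by
  simpa only [map_mul, map_add, map_one, P, Q] using RingQuot.mkAlgHom_rel ℂ weylRel.rel

lemma P_mul_Q_pow (n : ℕ) : P * Q ^ n = Q ^ n * P + n • Q ^ (n - 1) := by
  induction n with
  | zero => simp
  | succ n ih =>
    have hpow : n • Q ^ (n - 1) * Q = n • Q ^ n := by
      cases n with
      | zero => simp
      | succ n => rw [Nat.add_sub_cancel, smul_mul_assoc, ← pow_succ]
    rw [pow_succ, ← mul_assoc, ih, add_mul, mul_assoc, P_mul_Q, hpow, Nat.add_sub_cancel,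
      succ_nsmul, mul_add, mul_one, mul_assoc]
    abel

@[elab_as_elim]
lemma induction_on {C : Weyl → Prop} (a : Weyl) (algebraMap : ∀ c : ℂ, C (algebraMap ℂ Weyl c))
    (gen_P : C P) (gen_Q : C Q) (add : ∀ a b, C a → C b → C (a + b))
    (mul : ∀ a b, C a → C b → C (a * b)) : C a := by
  obtain ⟨x, rfl⟩ := RingQuot.mkAlgHom_surjective ℂ weylRel a
  induction x using FreeAlgebra.induction with
  | grade0 c => rw [AlgHom.commutes]; exact algebraMap c
  | grade1 i => fin_cases i; exacts [gen_P, gen_Q]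
  | mul a b ha hb => rw [map_mul]; exact mul _ _ ha hb
  | add a b ha hb => rw [map_add]; exact add _ _ ha hb

section NormalOrder

/-- Left multiplication of `A₁` on normally ordered expressions, where `∑ fᵢ Xⁱ` in `ℂ[X][X]`
encodes `∑ qⁱ fᵢ(p)`: the outer variable stands for `q`, the inner one for `p`. -/
def action : Weyl →ₐ[ℂ] Module.End ℂ ℂ[X][X] :=
  RingQuot.liftAlgHom ℂ ⟨FreeAlgebra.lift ℂ
    ![LinearMap.mulLeft ℂ (C X) + (derivative (R := ℂ[X])).restrictScalars ℂ,
      LinearMap.mulLeft ℂ X], by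
    rintro _ _ ⟨⟩
    ext1 u
    simp only [map_mul, map_add, map_one, FreeAlgebra.lift_ι_apply, Matrix.cons_val_zero,
      Matrix.cons_val_one, Module.End.mul_apply, Module.End.one_apply, LinearMap.add_apply,
      LinearMap.mulLeft_apply, LinearMap.restrictScalars_apply, derivative_mul, derivative_X]
    ring⟩

lemma action_P (u : ℂ[X][X]) : action P u = C X * u + derivative u := by
  simp [action, P]

lemma action_Q (u : ℂ[X][X]) : action Q u = X * u := by
  simp [action, Q]

/-- The linear map sending `∑ fᵢ Xⁱ` to `∑ qⁱ fᵢ(p)`. -/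
def normalOrder : ℂ[X][X] →ₗ[ℂ] Weyl :=
  lsum fun i => LinearMap.mulLeft ℂ (Q ^ i) ∘ₗ (aeval P).toLinearMap

lemma normalOrder_monomial (i : ℕ) (f : ℂ[X]) :
    normalOrder (monomial i f) = Q ^ i * aeval P f := by
  simp [normalOrder, lsum_apply, sum_monomial_index]

lemma normalOrder_C_mul_X_add_derivative (u : ℂ[X][X]) :
    normalOrder (C X * u + derivative u) = P * normalOrder u := by
  induction u using Polynomial.induction_on' with
  | add u v hu hv =>
    rw [mul_add, derivative_add, add_add_add_comm, map_add, hu, hv, map_add, mul_add]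
  | monomial i f =>
    rw [C_mul_monomial, derivative_monomial, map_add, normalOrder_monomial, normalOrder_monomial,
      normalOrder_monomial, map_mul, aeval_X, ← nsmul_eq_mul', map_nsmul, ← mul_assoc, ← mul_assoc,
      P_mul_Q_pow, add_mul, smul_mul_assoc, mul_smul_comm]

lemma normalOrder_X_mul (u : ℂ[X][X]) : normalOrder (X * u) = Q * normalOrder u := by
  induction u using Polynomial.induction_on' with
  | add u v hu hv => rw [mul_add, map_add, hu, hv, map_add, mul_add]
  | monomial i f =>
    rw [X_mul_monomial, normalOrder_monomial, normalOrder_monomial, pow_succ', mul_assoc]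

lemma normalOrder_action (a : Weyl) (u : ℂ[X][X]) :
    normalOrder (action a u) = a * normalOrder u := by
  induction a using induction_on generalizing u with
  | algebraMap c => rw [AlgHom.commutes, Module.algebraMap_end_apply, map_smul, Algebra.smul_def]
  | gen_P => rw [action_P, normalOrder_C_mul_X_add_derivative]
  | gen_Q => rw [action_Q, normalOrder_X_mul]
  | add a b ha hb => rw [map_add, LinearMap.add_apply, map_add, ha, hb, add_mul]
  | mul a b ha hb => rw [map_mul, Module.End.mul_apply, ha, hb, mul_assoc]

/-- The normally ordered symbol of an element of `A₁`, the inverse of `normalOrder`. -/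
def symbol (a : Weyl) : ℂ[X][X] := action a 1

lemma normalOrder_symbol (a : Weyl) : normalOrder (symbol a) = a := by
  have hone : normalOrder 1 = 1 := by
    rw [← monomial_zero_one, normalOrder_monomial, pow_zero, map_one, mul_one]
  rw [symbol, normalOrder_action, hone, mul_one]

lemma symbol_zero : symbol 0 = 0 := by simp [symbol]

lemma symbol_eq_zero {a : Weyl} : symbol a = 0 ↔ a = 0 :=
  ⟨fun h => by rw [← normalOrder_symbol a, h, map_zero], fun h => h ▸ symbol_zero⟩

lemma symbol_one : symbol 1 = 1 := by simp [symbol]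

lemma symbol_mul (a b : Weyl) : symbol (a * b) = action a (symbol b) := by simp [symbol]

end NormalOrder

section LeadingCoeff

lemma natDegree_action_P_le (u : ℂ[X][X]) : (action P u).natDegree ≤ u.natDegree := by
  rw [action_P]
  exact natDegree_add_le_of_degree_le (natDegree_C_mul_le _ _)
    ((natDegree_derivative_le u).trans (Nat.sub_le _ _))

lemma coeff_action_P {u : ℂ[X][X]} {m : ℕ} (hu : u.natDegree ≤ m) :
    (action P u).coeff m = X * u.coeff m := by
  rw [action_P, coeff_add, coeff_C_mul, coeff_derivative,
    coeff_eq_zero_of_natDegree_lt (Nat.lt_succ_of_le hu), zero_mul, add_zero]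

lemma action_aeval_P_mul_X_pow_succ (c : ℂ) (n : ℕ) (u : ℂ[X][X]) :
    action (aeval P (C c * X ^ (n + 1))) u = action (aeval P (C c * X ^ n)) (action P u) := by
  rw [pow_succ, ← mul_assoc, map_mul, aeval_X, map_mul, Module.End.mul_apply]

lemma action_aeval_P_C (c : ℂ) (u : ℂ[X][X]) : action (aeval P (C c)) u = c • u := by
  rw [aeval_C, AlgHom.commutes, Module.algebraMap_end_apply]

lemma natDegree_action_aeval_P_le (f : ℂ[X]) (u : ℂ[X][X]) :
    (action (aeval P f) u).natDegree ≤ u.natDegree := by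
  induction f using Polynomial.induction_on generalizing u with
  | C c => exact action_aeval_P_C c u ▸ natDegree_smul_le c u
  | add f g hf hg =>
    rw [map_add, map_add, LinearMap.add_apply]
    exact natDegree_add_le_of_degree_le (hf u) (hg u)
  | monomial n c ih =>
    rw [action_aeval_P_mul_X_pow_succ]
    exact (ih _).trans (natDegree_action_P_le u)

lemma coeff_action_aeval_P (f : ℂ[X]) {u : ℂ[X][X]} {m : ℕ} (hu : u.natDegree ≤ m) :
    (action (aeval P f) u).coeff m = f * u.coeff m := by
  induction f using Polynomial.induction_on generalizing u with
  | C c => rw [action_aeval_P_C, coeff_smul, smul_eq_C_mul]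
  | add f g hf hg => rw [map_add, map_add, LinearMap.add_apply, coeff_add, hf hu, hg hu, add_mul]
  | monomial n c ih =>
    rw [action_aeval_P_mul_X_pow_succ, ih ((natDegree_action_P_le u).trans hu), coeff_action_P hu,
      pow_succ, mul_assoc, mul_assoc, mul_assoc]

lemma action_Q_pow (n : ℕ) (u : ℂ[X][X]) : action (Q ^ n) u = X ^ n * u := by
  induction n with
  | zero => simp
  | succ n ih => rw [pow_succ', map_mul, Module.End.mul_apply, ih, action_Q, pow_succ', mul_assoc]

lemma coeff_action_normalOrder {s u : ℂ[X][X]} {n m : ℕ} (hs : s.natDegree ≤ n)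
    (hu : u.natDegree ≤ m) :
    (action (normalOrder s) u).coeff (n + m) = s.coeff n * u.coeff m := by
  refine induction_with_natDegree_le
    (fun s => (action (normalOrder s) u).coeff (n + m) = s.coeff n * u.coeff m) n (by simp)
    (fun i f _ hi => ?_) (fun f g _ _ ihf ihg => ?_) s hs
  · rw [C_mul_X_pow_eq_monomial, normalOrder_monomial, map_mul, Module.End.mul_apply, action_Q_pow,
      coeff_X_pow_mul', if_pos (hi.trans (Nat.le_add_right n m)), coeff_monomial]
    rcases hi.eq_or_lt with rfl | hlt
    · rw [if_pos rfl, Nat.add_sub_cancel_left, coeff_action_aeval_P f hu]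
    · have hdeg : (action (aeval P f) u).natDegree < n + m - i :=
        (natDegree_action_aeval_P_le f u).trans_lt (by omega)
      rw [if_neg hlt.ne, zero_mul, coeff_eq_zero_of_natDegree_lt hdeg]
  · rw [map_add, map_add, LinearMap.add_apply, coeff_add, coeff_add, add_mul, ihf, ihg]

lemma coeff_symbol_mul (a b : Weyl) :
    (symbol (a * b)).coeff ((symbol a).natDegree + (symbol b).natDegree) =
      (symbol a).leadingCoeff * (symbol b).leadingCoeff := by
  rw [leadingCoeff, leadingCoeff, ← coeff_action_normalOrder le_rfl le_rfl, normalOrder_symbol,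
    symbol_mul]

instance : Nontrivial Weyl :=
  nontrivial_of_ne 0 1 fun h => zero_ne_one (by rw [← symbol_zero, h, symbol_one])

instance : NoZeroDivisors Weyl where
  eq_zero_or_eq_zero_of_mul_eq_zero {a b} hab := by
    have hlead := coeff_symbol_mul a b
    rwa [hab, symbol_zero, coeff_zero, eq_comm, mul_eq_zero, leadingCoeff_eq_zero,
      leadingCoeff_eq_zero, symbol_eq_zero, symbol_eq_zero] at hlead

instance : IsDomain Weyl := NoZeroDivisors.to_isDomain Weyl

lemma mem_range_algebraMap_of_isUnit {a : Weyl} (ha : IsUnit a) :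
    a ∈ (algebraMap ℂ Weyl).range := by
  obtain ⟨b, hab⟩ := ha.exists_right_inv
  have hlead := coeff_symbol_mul a b
  have hne : (symbol a).leadingCoeff * (symbol b).leadingCoeff ≠ 0 :=
    mul_ne_zero (leadingCoeff_ne_zero.2 (symbol_eq_zero.not.2 (left_ne_zero_of_mul_eq_one hab)))
      (leadingCoeff_ne_zero.2 (symbol_eq_zero.not.2 (right_ne_zero_of_mul_eq_one hab)))
  rw [hab, symbol_one, coeff_one] at hlead
  have hdeg : (symbol a).natDegree + (symbol b).natDegree = 0 := by
    by_contra hpos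
    exact hne (by rw [← hlead, if_neg hpos])
  rw [if_pos hdeg] at hlead
  obtain ⟨c, -, hc⟩ := isUnit_iff.1 (IsUnit.of_mul_eq_one _ hlead.symm)
  have hsymbol : symbol a = C (C c) := by
    rw [eq_C_of_natDegree_eq_zero (Nat.eq_zero_of_add_eq_zero_right hdeg), hc, leadingCoeff,
      Nat.eq_zero_of_add_eq_zero_right hdeg]
  refine ⟨c, ?_⟩
  rw [← normalOrder_symbol a, hsymbol, ← monomial_zero_left, normalOrder_monomial, pow_zero,
    one_mul, aeval_C]

end LeadingCoeff

section Growth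

/-- The span of the normally ordered monomials `qⁱ pʲ` with `i, j ≤ n`. -/
def monomialSpan (n : ℕ) : Submodule ℂ Weyl :=
  Submodule.span ℂ (Set.range fun m : Fin (n + 1) × Fin (n + 1) => Q ^ (m.1 : ℕ) * P ^ (m.2 : ℕ))

lemma Q_pow_mul_P_pow_mem_monomialSpan {n i j : ℕ} (hi : i ≤ n) (hj : j ≤ n) :
    Q ^ i * P ^ j ∈ monomialSpan n :=
  Submodule.subset_span ⟨(⟨i, Nat.lt_succ_of_le hi⟩, ⟨j, Nat.lt_succ_of_le hj⟩), rfl⟩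

lemma finrank_monomialSpan_le (n : ℕ) : Module.finrank ℂ (monomialSpan n) ≤ (n + 1) ^ 2 :=
  (finrank_range_le_card _).trans_eq (by simp [pow_two])

lemma mul_mem_monomialSpan_succ {n : ℕ} {g a : Weyl} (hg : g ∈ ({1, P, Q} : Set Weyl))
    (ha : a ∈ monomialSpan n) : g * a ∈ monomialSpan (n + 1) := by
  induction ha using Submodule.span_induction with
  | zero => rw [mul_zero]; exact zero_mem _
  | add a b _ _ ha hb => rw [mul_add]; exact add_mem ha hb
  | smul c a _ ha => rw [mul_smul_comm]; exact Submodule.smul_mem _ c ha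
  | mem a ha =>
    obtain ⟨⟨i, j⟩, rfl⟩ := ha
    obtain rfl | rfl | rfl := hg
    · rw [one_mul]
      exact Q_pow_mul_P_pow_mem_monomialSpan (by omega) (by omega)
    · rw [← mul_assoc, P_mul_Q_pow, add_mul, mul_assoc, ← pow_succ', smul_mul_assoc]
      exact add_mem (Q_pow_mul_P_pow_mem_monomialSpan (by omega) (by omega))
        (nsmul_mem (Q_pow_mul_P_pow_mem_monomialSpan (by omega) (by omega)) _)
    · rw [← mul_assoc, ← pow_succ']
      exact Q_pow_mul_P_pow_mem_monomialSpan (by omega) (by omega)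

lemma span_pow_le_monomialSpan (n : ℕ) :
    Submodule.span ℂ {1, P, Q} ^ n ≤ monomialSpan n := by
  induction n with
  | zero =>
    rw [pow_zero, Submodule.one_le]
    simpa using Q_pow_mul_P_pow_mem_monomialSpan (le_refl 0) (le_refl 0)
  | succ n ih =>
    rw [pow_succ', Submodule.mul_le]
    intro g hg a ha
    induction hg using Submodule.span_induction with
    | zero => rw [zero_mul]; exact zero_mem _
    | add g g' _ _ hg hg' => rw [add_mul]; exact add_mem hg hg'
    | smul c g _ hg => rw [smul_mul_assoc]; exact Submodule.smul_mem _ c hg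
    | mem g hg => exact mul_mem_monomialSpan_succ hg (ih ha)

lemma one_le_span : 1 ≤ Submodule.span ℂ ({1, P, Q} : Set Weyl) :=
  Submodule.one_le.2 (Submodule.subset_span (Set.mem_insert 1 _))

lemma exists_mem_span_pow (a : Weyl) : ∃ n : ℕ, a ∈ Submodule.span ℂ {1, P, Q} ^ n := by
  induction a using induction_on with
  | algebraMap c => exact ⟨0, by rw [pow_zero]; exact Submodule.algebraMap_mem c⟩
  | gen_P => exact ⟨1, by rw [pow_one]; exact Submodule.subset_span (by simp)⟩
  | gen_Q => exact ⟨1, by rw [pow_one]; exact Submodule.subset_span (by simp)⟩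
  | add a b ha hb =>
    obtain ⟨⟨m, ha⟩, n, hb⟩ := And.intro ha hb
    exact ⟨max m n, add_mem (pow_le_pow_right' one_le_span (le_max_left m n) ha)
      (pow_le_pow_right' one_le_span (le_max_right m n) hb)⟩
  | mul a b ha hb =>
    obtain ⟨⟨m, ha⟩, n, hb⟩ := And.intro ha hb
    exact ⟨m + n, pow_add (Submodule.span ℂ {1, P, Q}) m n ▸ Submodule.mul_mem_mul ha hb⟩

lemma hasQuadraticGrowth : HasQuadraticGrowth ℂ Weyl := by
  refine ⟨Submodule.span ℂ {1, P, Q}, Submodule.fg_span (Set.toFinite _), one_le_span,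
    exists_mem_span_pow, 1, fun n => ?_⟩
  have : FiniteDimensional ℂ (monomialSpan n) := FiniteDimensional.span_of_finite ℂ (Set.toFinite _)
  rw [one_mul]
  exact (Submodule.finrank_mono (span_pow_le_monomialSpan n)).trans (finrank_monomialSpan_le n)

end Growth

end Weyl


theorem statement10_general {K A : Type*} [Field K] [IsAlgClosed K] [CharZero K] [Ring A]
    [IsDomain A] [Algebra K A] (hA : HasQuadraticGrowth K A)
    (hunits : ∀ a : A, IsUnit a → a ∈ (algebraMap K A).range) (h X₁ X₂ : A) (hX₁ : X₁ ≠ 0)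
    (hX₂ : X₂ ≠ 0) (l₁ l₂ : ℤ) (hl₁ : l₁ ≠ 0) (hl₂ : l₂ ≠ 0) (e₁ : ⁅h, X₁⁆ = (l₁ : K) • X₁)
    (e₂ : ⁅h, X₂⁆ = (l₂ : K) • X₂) (e₃ : ⁅X₁, X₂⁆ = 0) :
    0 < l₁ * l₂ ∧ ∃ a : K, a ≠ 0 ∧ X₁ ^ l₂.natAbs = a • X₂ ^ l₁.natAbs := by
  have hcomm : Commute X₁ X₂ := sub_eq_zero.1 e₃
  have hpos : 0 < l₁ * l₂ := hA.mul_pos_of_lie_eq_smul hunits hX₁ hX₂ hl₁ hl₂ e₁ e₂ hcomm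
  exact ⟨hpos, hA.exists_pow_eq_smul_pow hX₁ hX₂ hpos e₁ e₂ hcomm⟩

/-- Let `h, X₁, X₂ ∈ A₁` be nonzero and `λ₁, λ₂` nonzero integers with `⁅h,X₁⁆ = λ₁ X₁`,
`⁅h,X₂⁆ = λ₂ X₂` and `⁅X₁,X₂⁆ = 0`.  Then `λ₁ λ₂ > 0` and there is a nonzero `a ∈ ℂ` with
`X₁^{|λ₂|} = a • X₂^{|λ₁|}`. -/
theorem statement10 (h X₁ X₂ : Weyl) (hh : h ≠ 0) (hX₁ : X₁ ≠ 0) (hX₂ : X₂ ≠ 0)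
    (l₁ l₂ : ℤ) (hl₁ : l₁ ≠ 0) (hl₂ : l₂ ≠ 0)
    (e₁ : ⁅h, X₁⁆ = (l₁ : ℂ) • X₁) (e₂ : ⁅h, X₂⁆ = (l₂ : ℂ) • X₂)
    (e₃ : ⁅X₁, X₂⁆ = 0) :
    0 < l₁ * l₂ ∧ ∃ a : ℂ, a ≠ 0 ∧ X₁ ^ l₂.natAbs = a • X₂ ^ l₁.natAbs :=
  statement10_general Weyl.hasQuadraticGrowth (fun _ => Weyl.mem_range_algebraMap_of_isUnit)
    h X₁ X₂ hX₁ hX₂ l₁ l₂ hl₁ hl₂ e₁ e₂ e₃
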